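/- arXiv:2304.08270 — 9 statements merged into one kernel-verified Lean document; each statement's English description precedes it below -/
import Mathlib

section
/- Let q, p be natural numbers, let a, b be real constants, and let u, v, f, g : ℝ² → ℂ be smooth functions of the variables (τ, ρ). Write D = ∂_τ^q ∂_ρ^p for the iterated partial derivative operator. If on all of ℝ² the equations (1+τ)·∂_τ v − ρ·∂_ρ v − f + a·v = 0 and (1−τ)·∂_τ u + ρ·∂_ρ u − g + b·u = 0 hold, then on all of ℝ²: ∂_τ( (1+τ)·|Dv|² + (1−τ)·|Du|² ) + ∂_ρ( ρ·|Du|² − ρ·|Dv|² ) + 2(a+q−p)·|Dv|² + 2(b−q+p)·|Du|² = 2·Re( (Df)·conj(Dv) + (Dg)·conj(Du) ). -/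
/-- Partial derivative with respect to the first variable `τ`. -/
noncomputable def pd1 {E : Type*} [NormedAddCommGroup E] [NormedSpace ℝ E]
    (u : ℝ → ℝ → E) : ℝ → ℝ → E := fun τ ρ => deriv (fun t => u t ρ) τ

/-- Partial derivative with respect to the second variable `ρ`. -/
noncomputable def pd2 {E : Type*} [NormedAddCommGroup E] [NormedSpace ℝ E]
    (u : ℝ → ℝ → E) : ℝ → ℝ → E := fun τ ρ => deriv (fun r => u τ r) ρ

/-- The operator `D = ∂_τ^q ∂_ρ^p`. -/
noncomputable def Dop (q p : ℕ) (u : ℝ → ℝ → ℂ) : ℝ → ℝ → ℂ := pd1^[q] (pd2^[p] u)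


def Smo (w : ℝ → ℝ → ℂ) : Prop := ContDiff ℝ (⊤ : ℕ∞) (Function.uncurry w)

theorem Smo.diff {w : ℝ → ℝ → ℂ} (h : Smo w) : Differentiable ℝ (Function.uncurry w) :=
  ContDiff.differentiable h (by simp)

theorem Smo.has1' {w : ℝ → ℝ → ℂ} (h : Smo w) (t r : ℝ) :
    HasDerivAt (fun x => w x r) (fderiv ℝ (Function.uncurry w) (t, r) (1, 0)) t :=
  (h.diff (t, r)).hasFDerivAt.comp_hasDerivAt (f := fun x : ℝ => (x, r)) t
    ((hasDerivAt_id t).prodMk (hasDerivAt_const t r))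

theorem Smo.has2' {w : ℝ → ℝ → ℂ} (h : Smo w) (t r : ℝ) :
    HasDerivAt (fun x => w t x) (fderiv ℝ (Function.uncurry w) (t, r) (0, 1)) r :=
  (h.diff (t, r)).hasFDerivAt.comp_hasDerivAt (f := fun x : ℝ => (t, x)) r
    ((hasDerivAt_const r t).prodMk (hasDerivAt_id r))

theorem Smo.pd1_eq {w : ℝ → ℝ → ℂ} (h : Smo w) :
    Function.uncurry (pd1 w) = fun z => fderiv ℝ (Function.uncurry w) z (1, 0) := by
  funext z; exact (h.has1' z.1 z.2).deriv

theorem Smo.pd2_eq {w : ℝ → ℝ → ℂ} (h : Smo w) :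
    Function.uncurry (pd2 w) = fun z => fderiv ℝ (Function.uncurry w) z (0, 1) := by
  funext z; exact (h.has2' z.1 z.2).deriv

theorem Smo.fd {w : ℝ → ℝ → ℂ} (h : Smo w) :
    ContDiff ℝ (⊤ : ℕ∞) (fderiv ℝ (Function.uncurry w)) :=
  ContDiff.fderiv_right h (by simp)

theorem Smo.pd1 {w : ℝ → ℝ → ℂ} (h : Smo w) : Smo (pd1 w) := by
  unfold Smo; rw [h.pd1_eq]; exact h.fd.clm_apply contDiff_const

theorem Smo.pd2 {w : ℝ → ℝ → ℂ} (h : Smo w) : Smo (pd2 w) := by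
  unfold Smo; rw [h.pd2_eq]; exact h.fd.clm_apply contDiff_const

theorem Smo.has1 {w : ℝ → ℝ → ℂ} (h : Smo w) (t r : ℝ) :
    HasDerivAt (fun x => w x r) (_root_.pd1 w t r) t :=
  (h.has1' t r).differentiableAt.hasDerivAt

theorem Smo.has2 {w : ℝ → ℝ → ℂ} (h : Smo w) (t r : ℝ) :
    HasDerivAt (fun x => w t x) (_root_.pd2 w t r) r :=
  (h.has2' t r).differentiableAt.hasDerivAt

theorem Smo.comm {w : ℝ → ℝ → ℂ} (h : Smo w) (t r : ℝ) :
    _root_.pd1 (_root_.pd2 w) t r = _root_.pd2 (_root_.pd1 w) t r := by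
  have hd : DifferentiableAt ℝ (fderiv ℝ (Function.uncurry w)) (t, r) :=
    h.fd.differentiable (by simp) _
  have e1 : _root_.pd1 (_root_.pd2 w) t r
      = fderiv ℝ (fderiv ℝ (Function.uncurry w)) (t, r) (1, 0) (0, 1) := by
    refine (h.pd2.has1' t r).deriv.trans ?_
    rw [h.pd2_eq, fderiv_clm_apply hd (by fun_prop)]
    simp
  have e2 : _root_.pd2 (_root_.pd1 w) t r
      = fderiv ℝ (fderiv ℝ (Function.uncurry w)) (t, r) (0, 1) (1, 0) := by
    refine (h.pd1.has2' t r).deriv.trans ?_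
    rw [h.pd1_eq, fderiv_clm_apply hd (by fun_prop)]
    simp
  rw [e1, e2]
  have hs : IsSymmSndFDerivAt ℝ (Function.uncurry w) (t, r) :=
    (ContDiff.contDiffAt h).isSymmSndFDerivAt (by simp; exact WithTop.coe_le_coe.2 le_top)
  exact hs.eq _ _

def Teq (s c : ℝ) (w h : ℝ → ℝ → ℂ) : Prop := ∀ t r : ℝ,
  (1 + (s : ℂ) * (t : ℂ)) * pd1 w t r - (s : ℂ) * (r : ℂ) * pd2 w t r - h t r + (c : ℂ) * w t r = 0

theorem Teq.pd1 {s c : ℝ} {w h : ℝ → ℝ → ℂ} (hw : Smo w) (hh : Smo h) (H : Teq s c w h) :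
    Teq s (c + s) (pd1 w) (pd1 h) := by
  intro t r
  have ht : HasDerivAt (fun x : ℝ => (x : ℂ)) 1 t := Complex.ofRealCLM.hasDerivAt
  have h1 := ((((ht.const_mul (s : ℂ)).const_add 1).mul (hw.pd1.has1 t r)).sub
    ((hw.pd2.has1 t r).const_mul ((s : ℂ) * (r : ℂ)))).sub (hh.has1 t r) |>.add
    ((hw.has1 t r).const_mul (c : ℂ))
  have h2 := h1.unique ((hasDerivAt_const t (0 : ℂ)).congr_of_eventuallyEq
    (Filter.Eventually.of_forall fun x => H x r))
  rw [hw.comm] at h2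
  push_cast
  linear_combination h2

theorem Teq.pd2 {s c : ℝ} {w h : ℝ → ℝ → ℂ} (hw : Smo w) (hh : Smo h) (H : Teq s c w h) :
    Teq s (c - s) (pd2 w) (pd2 h) := by
  intro t r
  have ht : HasDerivAt (fun x : ℝ => (x : ℂ)) 1 r := Complex.ofRealCLM.hasDerivAt
  have h1 := (((hw.pd1.has2 t r).const_mul (1 + (s : ℂ) * (t : ℂ))).sub
    ((ht.const_mul (s : ℂ)).mul (hw.pd2.has2 t r))).sub (hh.has2 t r) |>.add
    ((hw.has2 t r).const_mul (c : ℂ))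
  have h2 := h1.unique ((hasDerivAt_const r (0 : ℂ)).congr_of_eventuallyEq
    (Filter.Eventually.of_forall fun x => H t x))
  rw [← hw.comm] at h2
  push_cast
  linear_combination h2

theorem Smo.it1 {w : ℝ → ℝ → ℂ} (h : Smo w) (q : ℕ) : Smo (_root_.pd1^[q] w) := by
  induction q with
  | zero => exact h
  | succ n ih => rw [Function.iterate_succ_apply']; exact ih.pd1

theorem Smo.it2 {w : ℝ → ℝ → ℂ} (h : Smo w) (q : ℕ) : Smo (_root_.pd2^[q] w) := by
  induction q with
  | zero => exact h
  | succ n ih => rw [Function.iterate_succ_apply']; exact ih.pd2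

theorem Teq.it1 {s c : ℝ} {w h : ℝ → ℝ → ℂ} (hw : Smo w) (hh : Smo h) (H : Teq s c w h) (q : ℕ) :
    Teq s (c + q * s) (_root_.pd1^[q] w) (_root_.pd1^[q] h) := by
  induction q with
  | zero => simpa using H
  | succ n ih =>
    rw [Function.iterate_succ_apply', Function.iterate_succ_apply']
    have := ih.pd1 (hw.it1 n) (hh.it1 n)
    convert this using 1
    push_cast; ring

theorem Teq.it2 {s c : ℝ} {w h : ℝ → ℝ → ℂ} (hw : Smo w) (hh : Smo h) (H : Teq s c w h) (q : ℕ) :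
    Teq s (c - q * s) (_root_.pd2^[q] w) (_root_.pd2^[q] h) := by
  induction q with
  | zero => simpa using H
  | succ n ih =>
    rw [Function.iterate_succ_apply', Function.iterate_succ_apply']
    have := ih.pd2 (hw.it2 n) (hh.it2 n)
    convert this using 1
    push_cast; ring

theorem hasDerivAt_nsq {w : ℝ → ℂ} {w' : ℂ} {t : ℝ} (h : HasDerivAt w w' t) :
    HasDerivAt (fun x => Complex.normSq (w x)) (2 * ((w t).re * w'.re + (w t).im * w'.im)) t := by
  have hr : HasDerivAt (fun x => (w x).re) w'.re t :=
    Complex.reCLM.hasFDerivAt.comp_hasDerivAt t h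
  have hi : HasDerivAt (fun x => (w x).im) w'.im t :=
    Complex.imCLM.hasFDerivAt.comp_hasDerivAt t h
  have := (hr.mul hr).add (hi.mul hi)
  simp only [Complex.normSq_apply]
  refine this.congr_deriv ?_
  ring

/-- The pointwise energy identity for the model outgoing/incoming transport equations. -/
theorem stmt0 (q p : ℕ) (a b : ℝ) (u v f g : ℝ → ℝ → ℂ)
    (hu : ContDiff ℝ (⊤ : ℕ∞) (Function.uncurry u))
    (hv : ContDiff ℝ (⊤ : ℕ∞) (Function.uncurry v))
    (hf : ContDiff ℝ (⊤ : ℕ∞) (Function.uncurry f))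
    (hg : ContDiff ℝ (⊤ : ℕ∞) (Function.uncurry g))
    (houtgoing : ∀ τ ρ : ℝ,
      (1 + (τ : ℂ)) * pd1 v τ ρ - (ρ : ℂ) * pd2 v τ ρ - f τ ρ + (a : ℂ) * v τ ρ = 0)
    (hincoming : ∀ τ ρ : ℝ,
      (1 - (τ : ℂ)) * pd1 u τ ρ + (ρ : ℂ) * pd2 u τ ρ - g τ ρ + (b : ℂ) * u τ ρ = 0) :
    ∀ τ ρ : ℝ,
      pd1 (fun τ' ρ' => (1 + τ') * Complex.normSq (Dop q p v τ' ρ')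
            + (1 - τ') * Complex.normSq (Dop q p u τ' ρ')) τ ρ
      + pd2 (fun τ' ρ' => ρ' * Complex.normSq (Dop q p u τ' ρ')
            - ρ' * Complex.normSq (Dop q p v τ' ρ')) τ ρ
      + 2 * (a + q - p) * Complex.normSq (Dop q p v τ ρ)
      + 2 * (b - q + p) * Complex.normSq (Dop q p u τ ρ)
      = 2 * (Dop q p f τ ρ * starRingEnd ℂ (Dop q p v τ ρ)
            + Dop q p g τ ρ * starRingEnd ℂ (Dop q p u τ ρ)).re := by
  have Su : Smo u := hu
  have Sv : Smo v := hv
  have Sf : Smo f := hf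
  have Sg : Smo g := hg
  have E1 : Teq 1 a v f := by
    intro t r; have := houtgoing t r; push_cast; linear_combination this
  have E2 : Teq (-1) b u g := by
    intro t r; have := hincoming t r; push_cast; linear_combination this
  have F1 : Teq 1 _ (Dop q p v) (Dop q p f) := (E1.it2 Sv Sf p).it1 (Sv.it2 p) (Sf.it2 p) q
  have F2 : Teq (-1) _ (Dop q p u) (Dop q p g) := (E2.it2 Su Sg p).it1 (Su.it2 p) (Sg.it2 p) q
  have SV : Smo (Dop q p v) := (Sv.it2 p).it1 q
  have SU : Smo (Dop q p u) := (Su.it2 p).it1 q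
  generalize Dop q p v = V at *
  generalize Dop q p u = U at *
  generalize Dop q p f = F at *
  generalize Dop q p g = G at *
  intro τ ρ
  have d1 := ((((hasDerivAt_id τ).const_add 1).mul (hasDerivAt_nsq (SV.has1 τ ρ))).add
    (((hasDerivAt_id τ).const_sub 1).mul (hasDerivAt_nsq (SU.has1 τ ρ)))).deriv
  have d2 := (((hasDerivAt_id ρ).mul (hasDerivAt_nsq (SU.has2 τ ρ))).sub
    ((hasDerivAt_id ρ).mul (hasDerivAt_nsq (SV.has2 τ ρ)))).deriv
  have e1 : pd1 (fun τ' ρ' => (1 + τ') * Complex.normSq (V τ' ρ')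
            + (1 - τ') * Complex.normSq (U τ' ρ')) τ ρ = _ := d1
  have e2 : pd2 (fun τ' ρ' => ρ' * Complex.normSq (U τ' ρ')
            - ρ' * Complex.normSq (V τ' ρ')) τ ρ = _ := d2
  rw [e1, e2]
  have hF : F τ ρ = _ := (sub_eq_zero.mp ((sub_add_eq_add_sub _ _ _).symm.trans (F1 τ ρ))).symm
  have hG : G τ ρ = _ := (sub_eq_zero.mp ((sub_add_eq_add_sub _ _ _).symm.trans (F2 τ ρ))).symm
  rw [hF, hG]
  simp [Complex.normSq_apply]
  ring
end

section
/- Let ε₀ > 0, A ≥ 0 and B > 0 be real numbers, and let f : [0, ε₀] → ℝ be continuous with f(0) = 0 and differentiable on (0, ε₀], satisfying ε·f'(ε) ≤ A − B·f(ε) for every ε ∈ (0, ε₀]. Then f(ε) ≤ A/B for every ε ∈ [0, ε₀]. -/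
/-- A degenerate Grönwall-type lemma: if `f` is continuous on `[0, ε₀]` with `f 0 = 0`,
differentiable on `(0, ε₀]` and satisfies `ε f'(ε) ≤ A − B f(ε)` there (with `A ≥ 0`,
`B > 0`), then `f ≤ A/B` on `[0, ε₀]`. -/
theorem stmt3 (ε₀ A B : ℝ) (hε₀ : 0 < ε₀) (hA : 0 ≤ A) (hB : 0 < B)
    (f : ℝ → ℝ) (hcont : ContinuousOn f (Set.Icc 0 ε₀)) (hf0 : f 0 = 0)
    (hdiff : ∀ ε ∈ Set.Ioc (0 : ℝ) ε₀, DifferentiableAt ℝ f ε)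
    (hineq : ∀ ε ∈ Set.Ioc (0 : ℝ) ε₀, ε * deriv f ε ≤ A - B * f ε) :
    ∀ ε ∈ Set.Icc (0 : ℝ) ε₀, f ε ≤ A / B := by
  have hanti : AntitoneOn (fun x : ℝ => x ^ B * (f x - A / B)) (Set.Icc 0 ε₀) := by
    refine antitoneOn_of_hasDerivWithinAt_nonpos (convex_Icc 0 ε₀)
      (f' := fun x => B * x ^ (B - 1) * (f x - A / B) + x ^ B * deriv f x) ?_ ?_ ?_
    · exact ((Real.continuous_rpow_const hB.le).continuousOn).mul
        (hcont.sub continuousOn_const)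
    · intro x hx
      rw [interior_Icc] at hx
      exact ((Real.hasDerivAt_rpow_const (Or.inl hx.1.ne')).mul
        (((hdiff x ⟨hx.1, hx.2.le⟩).hasDerivAt).sub_const (A / B))).hasDerivWithinAt
    · intro x hx
      rw [interior_Icc] at hx
      have h1 := hineq x ⟨hx.1, hx.2.le⟩
      have h2 : x ^ B = x ^ (B - 1) * x := by
        rw [← Real.rpow_add_one hx.1.ne', sub_add_cancel]
      have h3 : B * x ^ (B - 1) * (f x - A / B) + x ^ B * deriv f x
          = x ^ (B - 1) * (x * deriv f x - (A - B * f x)) := by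
        rw [h2]
        field_simp
        ring
      simp only [h3]
      exact mul_nonpos_of_nonneg_of_nonpos (Real.rpow_nonneg hx.1.le _) (by linarith)
  intro x hx
  rcases hx.1.eq_or_lt with h | h
  · rw [← h, hf0]
    positivity
  · have h1 := hanti (Set.left_mem_Icc.2 hε₀.le) hx hx.1
    simp only [Real.zero_rpow hB.ne', zero_mul] at h1
    have h2 := Real.rpow_pos_of_pos h B
    by_contra! h3
    have := mul_pos h2 (sub_pos.2 h3)
    linarith
end

section
/- Let p, q be natural numbers and σ an integer with |σ| ≤ q < p. Then the Jacobi polynomial with degenerate parameters vanishes identically: P_{p+q}^{(−p+σ, −p−σ)}(τ) = 0 for every τ ∈ ℝ. -/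
/-- Generalized binomial coefficient `z(z−1)⋯(z−r+1)/r!`. -/
noncomputable def gbinom (z : ℝ) (r : ℕ) : ℝ :=
  (∏ i ∈ Finset.range r, (z - i)) / (Nat.factorial r)

/-- The Jacobi polynomial `P_n^{(α,β)}(τ)`. -/
noncomputable def jacobiP (n : ℕ) (α β : ℝ) (τ : ℝ) : ℝ :=
  ∑ l ∈ Finset.range (n + 1),
    gbinom ((n : ℝ) + α) l * gbinom ((n : ℝ) + β) (n - l) *
      ((τ - 1) / 2) ^ (n - l) * ((τ + 1) / 2) ^ l

theorem gbinom_nat_eq_zero (z : ℝ) (a r : ℕ) (hz : z = a) (h : a < r) : gbinom z r = 0 := by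
  unfold gbinom
  rw [Finset.prod_eq_zero (Finset.mem_range.mpr h) (by rw [hz, sub_self]), zero_div]

/-- Vanishing of the Jacobi polynomial with degenerate parameters:
for `|σ| ≤ q < p`, `P_{p+q}^{(−p+σ, −p−σ)} ≡ 0`. -/
theorem stmt9 (p q : ℕ) (σ : ℤ) (hσ : |σ| ≤ (q : ℤ)) (hqp : q < p) (τ : ℝ) :
    jacobiP (p + q) (-(p : ℝ) + (σ : ℝ)) (-(p : ℝ) - (σ : ℝ)) τ = 0 := by
  obtain ⟨h1, h2⟩ := abs_le.mp hσ
  obtain ⟨a, ha⟩ := Int.eq_ofNat_of_zero_le (show 0 ≤ (q : ℤ) + σ by omega)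
  obtain ⟨b, hb⟩ := Int.eq_ofNat_of_zero_le (show 0 ≤ (q : ℤ) - σ by omega)
  have ha' : (q : ℝ) + σ = a := by exact_mod_cast ha
  have hb' : (q : ℝ) - σ = b := by exact_mod_cast hb
  unfold jacobiP
  refine Finset.sum_eq_zero fun l hl => ?_
  by_cases h : a < l
  · rw [gbinom_nat_eq_zero _ a l (by push_cast; linarith) h]
    simp
  · rw [gbinom_nat_eq_zero _ b (p + q - l) (by push_cast; linarith) (by omega)]
    simp
end

section
/- Let p be a real number and a, b natural numbers; set q = (a+b)/2 and σ = (a−b)/2. Then for all complex constants c, d, the function y(τ) = c·Q₁(τ) + d·Q₃(τ) satisfies, at every τ ∈ (−1,1), the equation (1−τ²)·y''(τ) + 2·((p−1)·τ − σ)·y'(τ) + (q(q+1) − p(p−1))·y(τ) = 0. -/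
/-- The solution `Q₁(τ) = ((1−τ)/2)^{p−σ}·P_a^{(p−σ,−p−σ)}(τ)`. -/
noncomputable def Q1 (p σ : ℝ) (a : ℕ) (τ : ℝ) : ℝ :=
  ((1 - τ) / 2) ^ (p - σ) * jacobiP a (p - σ) (-p - σ) τ

/-- The solution `Q₃(τ) = ((1+τ)/2)^{p+σ}·P_b^{(σ−p,p+σ)}(τ)`. -/
noncomputable def Q3 (p σ : ℝ) (b : ℕ) (τ : ℝ) : ℝ :=
  ((1 + τ) / 2) ^ (p + σ) * jacobiP b (σ - p) (p + σ) τ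


lemma gbinom_succ (z : ℝ) (r : ℕ) :
    ((r : ℝ) + 1) * gbinom z (r + 1) = (z - r) * gbinom z r := by
  unfold gbinom
  rw [Finset.prod_range_succ, Nat.factorial_succ]
  have h : (Nat.factorial r : ℝ) ≠ 0 := by positivity
  have h2 : (r : ℝ) + 1 ≠ 0 := by positivity
  push_cast
  field_simp

lemma mono_deriv (m l : ℕ) (x : ℝ) :
    HasDerivAt (fun t : ℝ => ((t - 1) / 2) ^ m * ((t + 1) / 2) ^ l)
      ((m : ℝ) * (((x - 1) / 2) ^ (m - 1) * ((x + 1) / 2) ^ l) / 2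
        + (l : ℝ) * (((x - 1) / 2) ^ m * ((x + 1) / 2) ^ (l - 1)) / 2) x := by
  have h1 : HasDerivAt (fun t : ℝ => (t - 1) / 2) (1 / 2) x :=
    ((hasDerivAt_id x).sub_const 1).div_const 2
  have h2 : HasDerivAt (fun t : ℝ => (t + 1) / 2) (1 / 2) x :=
    ((hasDerivAt_id x).add_const 1).div_const 2
  refine ((h1.pow m).mul (h2.pow l)).congr_deriv ?_
  simp only [Pi.pow_apply]
  ring

/-- algebraic identity for one monomial -/
lemma mono_alg (α β u v : ℝ) (m l : ℕ) :
    u * v * ((m : ℝ) * (((m - 1 : ℕ) : ℝ) * (u ^ (m - 1 - 1) * v ^ l) + (l : ℝ) * (u ^ (m - 1) * v ^ (l - 1)))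
      + (l : ℝ) * ((m : ℝ) * (u ^ (m - 1) * v ^ (l - 1)) + ((l - 1 : ℕ) : ℝ) * (u ^ m * v ^ (l - 1 - 1))))
    + ((α + 1) * v + (β + 1) * u) * ((m : ℝ) * (u ^ (m - 1) * v ^ l) + (l : ℝ) * (u ^ m * v ^ (l - 1)))
    - ((m : ℝ) + l) * ((m : ℝ) + l + α + β + 1) * (u ^ m * v ^ l)
    = (m : ℝ) * (m + α) * (u ^ (m - 1) * v ^ (l + 1) - u ^ m * v ^ l)
      - (l : ℝ) * (l + β) * (u ^ m * v ^ l - u ^ (m + 1) * v ^ (l - 1)) := by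
  rcases m with _ | _ | m <;> rcases l with _ | _ | l <;> simp <;> ring

lemma jacobi_tele (n : ℕ) (α β u v : ℝ) :
    ∑ l ∈ Finset.range (n + 1), gbinom ((n : ℝ) + α) l * gbinom ((n : ℝ) + β) (n - l) *
      (((n - l : ℕ) : ℝ) * (((n - l : ℕ) : ℝ) + α) * (u ^ (n - l - 1) * v ^ (l + 1) - u ^ (n - l) * v ^ l)
      - (l : ℝ) * (l + β) * (u ^ (n - l) * v ^ l - u ^ (n - l + 1) * v ^ (l - 1))) = 0 := by
  set G : ℕ → ℝ := fun l => gbinom ((n : ℝ) + α) l * gbinom ((n : ℝ) + β) (n - l) *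
    ((l : ℝ) * (l + β) * (u ^ (n - l) * v ^ l - u ^ (n - l + 1) * v ^ (l - 1))) with hG
  rw [Finset.sum_range_succ]
  have h : ∀ l ∈ Finset.range n, gbinom ((n : ℝ) + α) l * gbinom ((n : ℝ) + β) (n - l) *
      (((n - l : ℕ) : ℝ) * (((n - l : ℕ) : ℝ) + α) * (u ^ (n - l - 1) * v ^ (l + 1) - u ^ (n - l) * v ^ l)
      - (l : ℝ) * (l + β) * (u ^ (n - l) * v ^ l - u ^ (n - l + 1) * v ^ (l - 1))) = G (l + 1) - G l := by
    intro l hl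
    obtain ⟨k, rfl⟩ := Nat.exists_eq_add_of_lt (Finset.mem_range.mp hl)
    have e1 : l + k + 1 - l = k + 1 := by omega
    have e2 : l + k + 1 - (l + 1) = k := by omega
    simp only [hG, e1, e2, Nat.add_sub_cancel]
    have a1 := gbinom_succ (((l + k + 1 : ℕ) : ℝ) + α) l
    have a2 := gbinom_succ (((l + k + 1 : ℕ) : ℝ) + β) k
    set A := gbinom (((l + k + 1 : ℕ) : ℝ) + α) l
    set A' := gbinom (((l + k + 1 : ℕ) : ℝ) + α) (l + 1)
    set B := gbinom (((l + k + 1 : ℕ) : ℝ) + β) k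
    set B' := gbinom (((l + k + 1 : ℕ) : ℝ) + β) (k + 1)
    push_cast at a1 a2 ⊢
    linear_combination (A * ((k : ℝ) + 1 + α) * (u ^ k * v ^ (l + 1) - u ^ (k + 1) * v ^ l)) * a2
      - (B * ((l : ℝ) + 1 + β) * (u ^ k * v ^ (l + 1) - u ^ (k + 1) * v ^ l)) * a1
  rw [Finset.sum_congr rfl h, Finset.sum_range_sub]
  simp [hG]

lemma jacobi_ode (n : ℕ) (α β : ℝ) : ∃ P1 P2 : ℝ → ℝ,
    (∀ x, HasDerivAt (jacobiP n α β) (P1 x) x) ∧ (∀ x, HasDerivAt P1 (P2 x) x) ∧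
    ∀ x, (1 - x ^ 2) * P2 x + (β - α - (α + β + 2) * x) * P1 x
      + n * (n + α + β + 1) * jacobiP n α β x = 0 := by
  let C : ℕ → ℝ := fun l => gbinom ((n : ℝ) + α) l * gbinom ((n : ℝ) + β) (n - l)
  let M : ℕ → ℕ → ℝ → ℝ := fun m l t => ((t - 1) / 2) ^ m * ((t + 1) / 2) ^ l
  let D : ℕ → ℕ → ℝ → ℝ := fun m l x => (m : ℝ) * M (m - 1) l x / 2 + (l : ℝ) * M m (l - 1) x / 2
  have hD : ∀ m l x, HasDerivAt (M m l) (D m l x) x := fun m l x => mono_deriv m l x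
  refine ⟨fun x => ∑ l ∈ Finset.range (n + 1), C l * D (n - l) l x,
    fun x => ∑ l ∈ Finset.range (n + 1), C l * (((n - l : ℕ) : ℝ) * D (n - l - 1) l x / 2
      + (l : ℝ) * D (n - l) (l - 1) x / 2), ?_, ?_, ?_⟩
  · intro x
    have e : jacobiP n α β = fun x => ∑ l ∈ Finset.range (n + 1), C l * M (n - l) l x := by
      funext x
      simp only [jacobiP, C, M, mul_assoc]
    rw [e]
    exact HasDerivAt.fun_sum fun l _ => (hD _ _ x).const_mul _
  · intro x
    exact HasDerivAt.fun_sum fun l _ =>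
      ((((hD _ _ x).const_mul _).div_const 2).add (((hD _ _ x).const_mul _).div_const 2)).const_mul _
  · intro x
    have T := jacobi_tele n α β ((x - 1) / 2) ((x + 1) / 2)
    rw [← neg_eq_zero, ← T]
    simp only [jacobiP, Finset.mul_sum, ← Finset.sum_add_distrib, ← Finset.sum_neg_distrib]
    refine Finset.sum_congr rfl fun l hl => ?_
    rw [← mono_alg]
    have hn : ((n - l : ℕ) : ℝ) + l = n := by
      exact_mod_cast Nat.sub_add_cancel (Nat.lt_succ_iff.mp (Finset.mem_range.mp hl))
    rw [hn]
    simp only [C, D, M]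
    ring

lemma Q1_ode (p : ℝ) (a b : ℕ) (q σ : ℝ)
    (hq : q = ((a : ℝ) + (b : ℝ)) / 2) (hσ : σ = ((a : ℝ) - (b : ℝ)) / 2) :
    ∃ F1 F2 : ℝ → ℝ, ∀ x ∈ Set.Ioo (-1 : ℝ) 1, HasDerivAt (Q1 p σ a) (F1 x) x ∧
      HasDerivAt F1 (F2 x) x ∧ (1 - x ^ 2) * F2 x + 2 * ((p - 1) * x - σ) * F1 x
        + (q * (q + 1) - p * (p - 1)) * Q1 p σ a x = 0 := by
  obtain ⟨P1, P2, h1, h2, h3⟩ := jacobi_ode a (p - σ) (-p - σ)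
  have hw : ∀ r : ℝ, ∀ x ∈ Set.Ioo (-1 : ℝ) 1, HasDerivAt (fun t : ℝ => ((1 - t) / 2) ^ r)
      (-(r / 2) * ((1 - x) / 2) ^ (r - 1)) x := by
    intro r x hx
    have h : HasDerivAt (fun t : ℝ => (1 - t) / 2) (-1 / 2) x :=
      ((hasDerivAt_id x).const_sub 1).div_const 2
    refine (h.rpow_const (p := r) (Or.inl ?_)).congr_deriv (by ring)
    have := hx.2
    intro h0; linarith
  set r := p - σ with hr
  set P := jacobiP a r (-p - σ) with hP
  refine ⟨fun x => -(r / 2) * ((1 - x) / 2) ^ (r - 1) * P x + ((1 - x) / 2) ^ r * P1 x,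
    fun x => (-(r / 2) * (-((r - 1) / 2) * ((1 - x) / 2) ^ (r - 1 - 1)) * P x
      + -(r / 2) * ((1 - x) / 2) ^ (r - 1) * P1 x)
      + (-(r / 2) * ((1 - x) / 2) ^ (r - 1) * P1 x + ((1 - x) / 2) ^ r * P2 x), ?_⟩
  intro x hx
  refine ⟨(hw r x hx).mul (h1 x), (((hw (r - 1) x hx).const_mul _).mul (h1 x)).add
    ((hw r x hx).mul (h2 x)), ?_⟩
  have hpos : 0 < (1 - x) / 2 := by have := hx.2; linarith
  have e1 : ((1 - x) / 2) ^ (r - 1) = ((1 - x) / 2) ^ (r - 1 - 1) * ((1 - x) / 2) := by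
    rw [← Real.rpow_add_one hpos.ne']; congr 1; ring
  have e0 : ((1 - x) / 2) ^ r = ((1 - x) / 2) ^ (r - 1 - 1) * ((1 - x) / 2) * ((1 - x) / 2) := by
    rw [← Real.rpow_add_one hpos.ne', ← Real.rpow_add_one hpos.ne']; congr 1; ring
  have h := h3 x
  simp only [Q1, ← hr, ← hP]
  rw [e0, e1]
  set w := ((1 - x) / 2) ^ (r - 1 - 1)
  have hp : p = r + σ := by rw [hr]; ring
  clear_value r P w
  subst hp hq hσ
  linear_combination w * ((1 - x) / 2) * ((1 - x) / 2) * h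

lemma Q3_ode (p : ℝ) (a b : ℕ) (q σ : ℝ)
    (hq : q = ((a : ℝ) + (b : ℝ)) / 2) (hσ : σ = ((a : ℝ) - (b : ℝ)) / 2) :
    ∃ F1 F2 : ℝ → ℝ, ∀ x ∈ Set.Ioo (-1 : ℝ) 1, HasDerivAt (Q3 p σ b) (F1 x) x ∧
      HasDerivAt F1 (F2 x) x ∧ (1 - x ^ 2) * F2 x + 2 * ((p - 1) * x - σ) * F1 x
        + (q * (q + 1) - p * (p - 1)) * Q3 p σ b x = 0 := by
  obtain ⟨P1, P2, h1, h2, h3⟩ := jacobi_ode b (σ - p) (p + σ)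
  have hw : ∀ r : ℝ, ∀ x ∈ Set.Ioo (-1 : ℝ) 1, HasDerivAt (fun t : ℝ => ((1 + t) / 2) ^ r)
      ((r / 2) * ((1 + x) / 2) ^ (r - 1)) x := by
    intro r x hx
    have h : HasDerivAt (fun t : ℝ => (1 + t) / 2) (1 / 2) x :=
      ((hasDerivAt_id x).const_add 1).div_const 2
    refine (h.rpow_const (p := r) (Or.inl ?_)).congr_deriv (by ring)
    have := hx.1
    intro h0; linarith
  set r := p + σ with hr
  set P := jacobiP b (σ - p) r with hP
  refine ⟨fun x => (r / 2) * ((1 + x) / 2) ^ (r - 1) * P x + ((1 + x) / 2) ^ r * P1 x,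
    fun x => ((r / 2) * (((r - 1) / 2) * ((1 + x) / 2) ^ (r - 1 - 1)) * P x
      + (r / 2) * ((1 + x) / 2) ^ (r - 1) * P1 x)
      + ((r / 2) * ((1 + x) / 2) ^ (r - 1) * P1 x + ((1 + x) / 2) ^ r * P2 x), ?_⟩
  intro x hx
  refine ⟨(hw r x hx).mul (h1 x), (((hw (r - 1) x hx).const_mul _).mul (h1 x)).add
    ((hw r x hx).mul (h2 x)), ?_⟩
  have hpos : 0 < (1 + x) / 2 := by have := hx.1; linarith
  have e1 : ((1 + x) / 2) ^ (r - 1) = ((1 + x) / 2) ^ (r - 1 - 1) * ((1 + x) / 2) := by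
    rw [← Real.rpow_add_one hpos.ne']; congr 1; ring
  have e0 : ((1 + x) / 2) ^ r = ((1 + x) / 2) ^ (r - 1 - 1) * ((1 + x) / 2) * ((1 + x) / 2) := by
    rw [← Real.rpow_add_one hpos.ne', ← Real.rpow_add_one hpos.ne']; congr 1; ring
  have h := h3 x
  simp only [Q3, ← hr, ← hP]
  rw [e0, e1]
  set w := ((1 + x) / 2) ^ (r - 1 - 1)
  have hp : p = r - σ := by rw [hr]; ring
  clear_value r P w
  subst hp hq hσ
  linear_combination w * ((1 + x) / 2) * ((1 + x) / 2) * h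

/-- Every complex linear combination `y = c·Q₁ + d·Q₃` satisfies the Jacobi-type
equation (C.1) governing asymptotic expansion coefficients near spatial infinity. -/
theorem stmt10 (p : ℝ) (a b : ℕ) (q σ : ℝ)
    (hq : q = ((a : ℝ) + (b : ℝ)) / 2) (hσ : σ = ((a : ℝ) - (b : ℝ)) / 2)
    (c d : ℂ) :
    ∀ τ ∈ Set.Ioo (-1 : ℝ) 1,
      ((1 - τ ^ 2 : ℝ) : ℂ)
          * deriv (deriv (fun t : ℝ => c * (Q1 p σ a t : ℂ) + d * (Q3 p σ b t : ℂ))) τ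
        + ((2 * ((p - 1) * τ - σ) : ℝ) : ℂ)
          * deriv (fun t : ℝ => c * (Q1 p σ a t : ℂ) + d * (Q3 p σ b t : ℂ)) τ
        + ((q * (q + 1) - p * (p - 1) : ℝ) : ℂ)
          * (c * (Q1 p σ a τ : ℂ) + d * (Q3 p σ b τ : ℂ)) = 0 := by
  obtain ⟨F1, F2, hF⟩ := Q1_ode p a b q σ hq hσ
  obtain ⟨G1, G2, hG⟩ := Q3_ode p a b q σ hq hσ
  intro τ hτ
  have d1 : ∀ x ∈ Set.Ioo (-1 : ℝ) 1,
      deriv (fun t : ℝ => c * (Q1 p σ a t : ℂ) + d * (Q3 p σ b t : ℂ)) x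
        = c * (F1 x : ℂ) + d * (G1 x : ℂ) := fun x hx =>
    (((hF x hx).1.ofReal_comp.const_mul c).add ((hG x hx).1.ofReal_comp.const_mul d)).deriv
  have d2 : deriv (deriv (fun t : ℝ => c * (Q1 p σ a t : ℂ) + d * (Q3 p σ b t : ℂ))) τ
      = c * (F2 τ : ℂ) + d * (G2 τ : ℂ) := by
    have e : deriv (fun t : ℝ => c * (Q1 p σ a t : ℂ) + d * (Q3 p σ b t : ℂ))
        =ᶠ[nhds τ] fun x => c * (F1 x : ℂ) + d * (G1 x : ℂ) :=
      Filter.eventually_of_mem (isOpen_Ioo.mem_nhds hτ) d1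
    rw [e.deriv_eq]
    exact (((hF τ hτ).2.1.ofReal_comp.const_mul c).add
      ((hG τ hτ).2.1.ofReal_comp.const_mul d)).deriv
  rw [d2, d1 τ hτ]
  have hf := congrArg (fun z : ℝ => (z : ℂ)) (hF τ hτ).2.2
  have hg := congrArg (fun z : ℝ => (z : ℂ)) (hG τ hτ).2.2
  push_cast at hf hg ⊢
  linear_combination c * hf + d * hg
end

section
/- Let p be a real number and a, b natural numbers with (a+b)/2 < p; set q = (a+b)/2 and σ = (a−b)/2. Then the functions Q₁ and Q₃ are linearly independent as functions on (−1,1): if c, d are real numbers with c·Q₁(τ) + d·Q₃(τ) = 0 for all τ ∈ (−1,1), then c = 0 and d = 0. -/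
theorem gbinom_ne (z : ℝ) (hz : z < 0) (r : ℕ) : gbinom z r ≠ 0 := by
  unfold gbinom
  refine div_ne_zero (Finset.prod_ne_zero_iff.2 fun i _ => ?_)
    (by exact_mod_cast Nat.factorial_ne_zero r)
  have : (0 : ℝ) ≤ i := Nat.cast_nonneg i
  linarith

theorem jacobiP_one (n : ℕ) (α β : ℝ) : jacobiP n α β 1 = gbinom (n + α) n := by
  unfold jacobiP
  rw [Finset.sum_eq_single n]
  · simp [gbinom]
  · intro l hl hne
    have h1 : n - l ≠ 0 := by
      have := Finset.mem_range.1 hl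
      omega
    simp [h1]
  · simp

theorem jacobiP_neg_one (n : ℕ) (α β : ℝ) :
    jacobiP n α β (-1) = gbinom (n + β) n * (-1) ^ n := by
  unfold jacobiP
  rw [Finset.sum_eq_single 0]
  · norm_num [gbinom]
  · intro l hl hne
    simp [hne]
  · simp

theorem jacobiP_cont (n : ℕ) (α β : ℝ) : Continuous (jacobiP n α β) := by
  unfold jacobiP
  fun_prop

/-- For `(a+b)/2 < p`, the solutions `Q₁` and `Q₃` are linearly independent
as functions on `(−1,1)`. -/
theorem stmt11 (p : ℝ) (a b : ℕ) (q σ : ℝ)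
    (hq : q = ((a : ℝ) + (b : ℝ)) / 2) (hσ : σ = ((a : ℝ) - (b : ℝ)) / 2)
    (hqp : q < p) :
    ∀ c d : ℝ, (∀ τ ∈ Set.Ioo (-1 : ℝ) 1, c * Q1 p σ a τ + d * Q3 p σ b τ = 0) →
      c = 0 ∧ d = 0 := by
  intro c d h
  have ha : (0 : ℝ) ≤ a := Nat.cast_nonneg a
  have hb : (0 : ℝ) ≤ b := Nat.cast_nonneg b
  have e1 : 0 < p - σ := by linarith
  have e3 : 0 < p + σ := by linarith
  have c1 : Continuous (Q1 p σ a) := by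
    unfold Q1
    exact (Continuous.rpow_const (by fun_prop) fun _ => Or.inr e1.le).mul (jacobiP_cont _ _ _)
  have c3 : Continuous (Q3 p σ b) := by
    unfold Q3
    exact (Continuous.rpow_const (by fun_prop) fun _ => Or.inr e3.le).mul (jacobiP_cont _ _ _)
  have hcl : IsClosed {τ : ℝ | c * Q1 p σ a τ + d * Q3 p σ b τ = 0} :=
    isClosed_eq (by fun_prop) continuous_const
  have hsub := closure_minimal (s := Set.Ioo (-1 : ℝ) 1) h hcl
  rw [closure_Ioo (by norm_num)] at hsub
  have hp : c * Q1 p σ a 1 + d * Q3 p σ b 1 = 0 := hsub (by norm_num)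
  have hm : c * Q1 p σ a (-1) + d * Q3 p σ b (-1) = 0 := hsub (by norm_num)
  have n1 := gbinom_ne (a + (-p - σ)) (by linarith) a
  have n3 := gbinom_ne (b + (σ - p)) (by linarith) b
  constructor
  · norm_num [Q1, Q3, jacobiP_neg_one, Real.zero_rpow e3.ne'] at hm
    exact hm.resolve_right n1
  · norm_num [Q1, Q3, jacobiP_one, Real.zero_rpow e1.ne'] at hp
    exact hp.resolve_right n3
end

section
/- Let p, q be natural numbers and σ an integer with |σ| ≤ q < p. Then every twice continuously differentiable function y : (−1,1) → ℝ satisfying (1−τ²)·y''(τ) + 2·((p−1)·τ − σ)·y'(τ) + (q(q+1) − p(p−1))·y(τ) = 0 for all τ ∈ (−1,1) coincides on (−1,1) with the restriction of a polynomial of degree at most p+q. In particular, every such solution extends real-analytically across τ = ±1. -/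
open Polynomial in
theorem jac_exists (f g : ℕ → ℝ) (s e : ℕ) (hse : s ≤ e) (hs : ∀ k, k + 1 = s → f k = 0)
    (hf : ∀ k, s ≤ k → k < e → f k ≠ 0) (hg : ∀ k, s ≤ k → k < e → g k ≠ 0) (he : g e = 0) :
    ∃ Z : ℝ[X], Z.natDegree = e ∧ Z ≠ 0 ∧ ∀ k, f k * Z.coeff (k+1) = g k * Z.coeff k := by
  set c : ℕ → ℝ := fun k => if s ≤ k ∧ k ≤ e then ∏ i ∈ Finset.Ico s k, g i / f i else 0 with hc
  have hco : ∀ k, (∑ i ∈ Finset.range (e+1), C (c i) * X ^ i : ℝ[X]).coeff k = c k := by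
    intro k
    simp only [finsetSum_coeff, coeff_C_mul, coeff_X_pow]
    simp only [mul_ite, mul_one, mul_zero, Finset.sum_ite_eq, Finset.mem_range]
    split_ifs with h
    · rfl
    · simp only [hc]; rw [if_neg (by omega)]
  have hce : c e ≠ 0 := by
    simp only [hc]
    rw [if_pos ⟨hse, le_rfl⟩]
    refine Finset.prod_ne_zero_iff.2 fun i hi => ?_
    rw [Finset.mem_Ico] at hi
    exact div_ne_zero (hg i hi.1 hi.2) (hf i hi.1 hi.2)
  refine ⟨∑ i ∈ Finset.range (e+1), C (c i) * X ^ i, ?_, ?_, ?_⟩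
  · apply le_antisymm
    · rw [natDegree_le_iff_coeff_eq_zero]
      intro k hk
      rw [hco]; simp only [hc]; rw [if_neg (by omega)]
    · apply le_natDegree_of_ne_zero
      rw [hco]; exact hce
  · intro h
    have := hco e
    rw [h] at this
    exact hce this.symm
  · intro k
    rw [hco, hco]
    by_cases h1 : k + 1 < s
    · simp only [hc]; rw [if_neg (by omega), if_neg (by omega)]; simp
    by_cases h2 : k + 1 = s
    · rw [hs k h2]; simp only [hc]; rw [if_neg (c := s ≤ k ∧ k ≤ e) (by omega)]; simp
    by_cases h3 : k < e
    · simp only [hc]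
      rw [if_pos (by omega), if_pos (by omega), Finset.prod_Ico_succ_top (by omega)]
      have := hf k (by omega) h3
      field_simp
    by_cases h4 : k = e
    · subst h4; rw [he]; simp only [hc]; rw [if_neg (c := s ≤ k + 1 ∧ k + 1 ≤ k) (by omega)]; simp
    · simp only [hc]; rw [if_neg (by omega), if_neg (by omega)]; simp

open Polynomial in
theorem jac_poly_ode (a b K : ℝ) (Z : ℝ[X])
    (h : ∀ k : ℕ, (2 * ((k:ℝ)+1) * (k - (a - b))) * Z.coeff (k+1)
      = ((k:ℝ)*(k-1) - 2 * a * k - K) * Z.coeff k) :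
    ∃ P : ℝ[X], (Z ≠ 0 → P ≠ 0) ∧ P.natDegree = Z.natDegree ∧ ∀ t : ℝ,
      (1 - t^2) * P.derivative.derivative.eval t + 2 * (a * t - b) * P.derivative.eval t
        + K * P.eval t = 0 := by
  have key : C 2 * (X * derivative (derivative Z)) - X * (X * derivative (derivative Z))
      - C (2 * (a - b)) * derivative Z + C (2 * a) * (X * derivative Z) + C K * Z = 0 := by
    ext n
    have := h n
    rcases n with _ | _ | n
    · simp [coeff_derivative, -map_mul, -map_sub] at this ⊢
      linarith
    · simp [coeff_derivative, coeff_X_mul, coeff_C_mul, -map_mul, -map_sub] at this ⊢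
      ring_nf at this ⊢
      linarith
    · simp [coeff_derivative, coeff_X_mul, coeff_C_mul, -map_mul, -map_sub] at this ⊢
      ring_nf at this ⊢
      linarith
  refine ⟨Z.comp (C 1 - X), ?_, ?_, fun t => ?_⟩
  · intro hZ h0
    apply hZ
    have h3 := congrArg (fun R => R.comp (C 1 - X)) h0
    simpa [comp_assoc] using h3
  · rw [natDegree_comp]
    have : (C 1 - X : ℝ[X]).natDegree = 1 := by
      rw [← neg_sub, natDegree_neg, natDegree_X_sub_C]
    rw [this, mul_one]
  · have h2 := congrArg (eval (1 - t)) key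
    simp [derivative_comp] at h2 ⊢
    linear_combination h2

open Polynomial in
theorem jac_indep (A B : ℝ[X]) (hA : A ≠ 0) (hB : B ≠ 0) (h : A.natDegree < B.natDegree) :
    A * derivative B - derivative A * B ≠ 0 := by
  intro h0
  have h1 := sub_eq_zero.1 h0
  obtain ⟨b, hb⟩ : ∃ b, B.natDegree = b + 1 := ⟨B.natDegree - 1, by omega⟩
  have hlA : A.coeff A.natDegree ≠ 0 := by simpa using hA
  have hlB : B.coeff (b+1) ≠ 0 := by rw [← hb]; simpa using hB
  have e1 := coeff_mul_add_eq_of_natDegree_le (f := A) (g := derivative B) le_rfl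
    (show (derivative B).natDegree ≤ b from (natDegree_derivative_le B).trans (by omega))
  rw [h1, coeff_derivative] at e1
  rcases ha : A.natDegree with _ | a
  · have : derivative A = 0 := derivative_of_natDegree_zero ha
    rw [this, zero_mul, coeff_zero] at e1
    have : (b:ℝ) + 1 ≠ 0 := by positivity
    exact (mul_ne_zero hlA (mul_ne_zero hlB this)) e1.symm
  · have e2 := coeff_mul_add_eq_of_natDegree_le (f := derivative A) (g := B)
      (show (derivative A).natDegree ≤ a from (natDegree_derivative_le A).trans (by omega)) hb.le
    rw [coeff_derivative] at e2
    rw [ha] at e1 hlA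
    rw [show a + 1 + b = a + (b+1) by ring, e2] at e1
    have e3 : (A.coeff (a+1) * B.coeff (b+1)) * ((a:ℝ) - b) = 0 := by linear_combination e1
    have e4 : (a:ℝ) - b = 0 := (mul_eq_zero.1 e3).resolve_left (mul_ne_zero hlA hlB)
    have : a = b := by exact_mod_cast sub_eq_zero.1 e4
    omega

theorem jac_wronsk (m n : ℕ) (K : ℝ) (u u' u'' v v' v'' : ℝ → ℝ)
    (hu : ∀ t ∈ Set.Ioo (-1:ℝ) 1, HasDerivAt u (u' t) t)
    (hu' : ∀ t ∈ Set.Ioo (-1:ℝ) 1, HasDerivAt u' (u'' t) t)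
    (hv : ∀ t ∈ Set.Ioo (-1:ℝ) 1, HasDerivAt v (v' t) t)
    (hv' : ∀ t ∈ Set.Ioo (-1:ℝ) 1, HasDerivAt v' (v'' t) t)
    (ou : ∀ t ∈ Set.Ioo (-1:ℝ) 1,
      (1 - t^2) * u'' t + (m * (1 + t) - n * (1 - t)) * u' t + K * u t = 0)
    (ov : ∀ t ∈ Set.Ioo (-1:ℝ) 1,
      (1 - t^2) * v'' t + (m * (1 + t) - n * (1 - t)) * v' t + K * v t = 0) :
    ∃ c : ℝ, ∀ t ∈ Set.Ioo (-1:ℝ) 1, u t * v' t - u' t * v t = c * ((1 - t)^m * (1 + t)^n) := by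
  have hd : ∀ t ∈ Set.Ioo (-1:ℝ) 1, HasDerivAt
      (fun t => (u t * v' t - u' t * v t) / ((1 - t)^m * (1 + t)^n)) 0 t := by
    intro t ht
    have p1 : 0 < 1 - t := by linarith [ht.2]
    have p2 : 0 < 1 + t := by linarith [ht.1]
    have d1 := (((hasDerivAt_id t).const_sub 1).pow m).mul (((hasDerivAt_id t).const_add 1).pow n)
    have d2 := ((hu t ht).mul (hv' t ht)).sub ((hu' t ht).mul (hv t ht))
    have hne : (1 - t)^m * (1 + t)^n ≠ 0 := by positivity
    have d3 := d2.div d1 (by simpa using hne)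
    refine d3.congr_deriv ?_
    have o1 := ou t ht
    have o2 := ov t ht
    rw [div_eq_zero_iff]
    left
    have hm : (m:ℝ) * (1 - t)^(m-1) * (1 - t) = m * (1-t)^m := by
      rcases m with _ | m
      · simp
      · simp [pow_succ]; ring
    have hn : (n:ℝ) * (1 + t)^(n-1) * (1 + t) = n * (1+t)^n := by
      rcases n with _ | n
      · simp
      · simp [pow_succ]; ring
    have : (1 - t) * (1 + t) ≠ 0 := by positivity
    refine (mul_eq_zero.1 (?_ : (1 - t) * (1 + t) * _ = 0)).resolve_left this
    simp [-mul_eq_zero]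
    generalize (1 - t)^(m-1) = M at *
    generalize (1 + t)^(n-1) = N at *
    generalize (1 - t)^m = M' at *
    generalize (1 + t)^n = N' at *
    linear_combination (u t * M' * N') * o2 - (v t * M' * N') * o1
      + (u t * v' t - u' t * v t) * N' * (1 + t) * hm
      - (u t * v' t - u' t * v t) * M' * (1 - t) * hn
  refine ⟨(fun t => (u t * v' t - u' t * v t) / ((1 - t)^m * (1 + t)^n)) 0, fun t ht => ?_⟩
  have h0 : (0:ℝ) ∈ Set.Ioo (-1:ℝ) 1 := by constructor <;> norm_num
  have := isOpen_Ioo.is_const_of_deriv_eq_zero isPreconnected_Ioo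
    (fun t ht => (hd t ht).differentiableAt.differentiableWithinAt)
    (fun t ht => (hd t ht).deriv) ht h0
  have p1 : 0 < 1 - t := by linarith [ht.2]
  have p2 : 0 < 1 + t := by linarith [ht.1]
  have hne : (1 - t)^m * (1 + t)^n ≠ 0 := by positivity
  beta_reduce
  rw [← this]
  field_simp

/-- Lemma C.1: for `|σ| ≤ q < p`, every `C²` solution on `(−1,1)` of the Jacobi-type
equation `(1−τ²)y'' + 2((p−1)τ − σ)y' + (q(q+1) − p(p−1))y = 0` coincides with the
restriction of a polynomial of degree at most `p+q`; in particular it extends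
real-analytically across `τ = ±1`. -/
theorem stmt12 (p q : ℕ) (σ : ℤ) (hσ : |σ| ≤ (q : ℤ)) (hqp : q < p)
    (y : ℝ → ℝ) (hy : ContDiffOn ℝ 2 y (Set.Ioo (-1 : ℝ) 1))
    (hode : ∀ τ ∈ Set.Ioo (-1 : ℝ) 1,
      (1 - τ ^ 2) * deriv (deriv y) τ + 2 * (((p : ℝ) - 1) * τ - (σ : ℝ)) * deriv y τ
        + ((q : ℝ) * ((q : ℝ) + 1) - (p : ℝ) * ((p : ℝ) - 1)) * y τ = 0) :
    ∃ P : Polynomial ℝ, P.degree ≤ (p + q : ℕ) ∧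
      ∀ τ ∈ Set.Ioo (-1 : ℝ) 1, y τ = P.eval τ := by
  have hs := abs_le.1 hσ
  obtain ⟨m, hm⟩ : ∃ m : ℕ, (m:ℤ) = p - 1 - σ := ⟨(p - 1 - σ).toNat, by omega⟩
  obtain ⟨n, hn⟩ : ∃ n : ℕ, (n:ℤ) = p - 1 + σ := ⟨(p - 1 + σ).toNat, by omega⟩
  obtain ⟨d, hd⟩ : ∃ d : ℕ, p = q + 1 + d := ⟨p - q - 1, by omega⟩
  have hmR : (m:ℝ) = p - 1 - σ := by exact_mod_cast hm
  have hnR : (n:ℝ) = p - 1 + σ := by exact_mod_cast hn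
  have hdR : (p:ℝ) = q + 1 + d := by exact_mod_cast hd
  set K : ℝ := (q : ℝ) * ((q : ℝ) + 1) - (p : ℝ) * ((p : ℝ) - 1) with hK
  have hgfac : ∀ k : ℕ, ((k:ℝ)*(k-1) - 2 * ((p:ℝ)-1) * k - K)
      = ((k:ℝ) - ((p + q : ℕ) : ℝ)) * ((k:ℝ) - d) := by
    intro k; rw [hK]; push_cast; rw [hdR]; ring
  have hffac : ∀ k : ℕ, (2 * ((k:ℝ)+1) * (k - (((p:ℝ)-1) - σ))) = 2 * ((k:ℝ)+1) * ((k:ℝ) - m) := by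
    intro k; rw [hmR]
  have hfne : ∀ k : ℕ, k ≠ m → (2 * ((k:ℝ)+1) * (k - (((p:ℝ)-1) - σ))) ≠ 0 := by
    intro k hk; rw [hffac]
    have : (k:ℝ) - m ≠ 0 := sub_ne_zero.2 (by exact_mod_cast hk)
    have : (k:ℝ) + 1 ≠ 0 := by positivity
    positivity
  have hgne : ∀ k : ℕ, k ≠ p + q → k ≠ d → ((k:ℝ)*(k-1) - 2 * ((p:ℝ)-1) * k - K) ≠ 0 := by
    intro k h1 h2; rw [hgfac]
    exact mul_ne_zero (sub_ne_zero.2 (by exact_mod_cast h1)) (sub_ne_zero.2 (by exact_mod_cast h2))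
  obtain ⟨ZA, hA1, hA2, hA3⟩ := jac_exists (fun k => (2 * ((k:ℝ)+1) * (k - (((p:ℝ)-1) - σ))))
    (fun k => ((k:ℝ)*(k-1) - 2 * ((p:ℝ)-1) * k - K)) 0 d (Nat.zero_le _) (fun k hk => by omega)
    (fun k _ h2 => hfne k (by omega)) (fun k _ h2 => hgne k (by omega) (by omega))
    (by simp only [hgfac]; simp)
  obtain ⟨ZB, hB1, hB2, hB3⟩ := jac_exists (fun k => (2 * ((k:ℝ)+1) * (k - (((p:ℝ)-1) - σ))))
    (fun k => ((k:ℝ)*(k-1) - 2 * ((p:ℝ)-1) * k - K)) (m+1) (p+q) (by omega)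
    (fun k hk => by
      have : k = m := by omega
      simp only [hffac]; rw [this]; simp)
    (fun k _ h2 => hfne k (by omega)) (fun k _ h2 => hgne k (by omega) (by omega))
    (by simp only [hgfac]; simp)
  obtain ⟨A, hA0, hAd, hAo⟩ := jac_poly_ode _ _ _ ZA hA3
  obtain ⟨B, hB0, hBd, hBo⟩ := jac_poly_ode _ _ _ ZB hB3
  rw [hA1] at hAd
  rw [hB1] at hBd
  have hW := jac_indep A B (hA0 hA2) (hB0 hB2) (by omega)
  have hco : ∀ t : ℝ, (m:ℝ) * (1 + t) - n * (1 - t) = 2 * (((p:ℝ)-1) * t - σ) := by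
    intro t; rw [hmR, hnR]; ring
  have hy1 : ∀ t ∈ Set.Ioo (-1:ℝ) 1, HasDerivAt y (deriv y t) t := fun t ht =>
    ((hy.differentiableOn (by norm_num)).differentiableAt (isOpen_Ioo.mem_nhds ht)).hasDerivAt
  have hy2 : ∀ t ∈ Set.Ioo (-1:ℝ) 1, HasDerivAt (deriv y) (deriv (deriv y) t) t := fun t ht =>
    (((hy.deriv_of_isOpen (m := 1) isOpen_Ioo (by norm_num)).differentiableOn
      (by norm_num)).differentiableAt (isOpen_Ioo.mem_nhds ht)).hasDerivAt
  have hyo : ∀ t ∈ Set.Ioo (-1:ℝ) 1,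
      (1 - t^2) * deriv (deriv y) t + (m * (1 + t) - n * (1 - t)) * deriv y t + K * y t = 0 := by
    intro t ht; rw [hco]; exact hode t ht
  obtain ⟨c, hc⟩ := jac_wronsk m n K (fun t => A.eval t) (fun t => A.derivative.eval t)
    (fun t => A.derivative.derivative.eval t) (fun t => B.eval t) (fun t => B.derivative.eval t)
    (fun t => B.derivative.derivative.eval t) (fun t _ => A.hasDerivAt t)
    (fun t _ => A.derivative.hasDerivAt t) (fun t _ => B.hasDerivAt t)
    (fun t _ => B.derivative.hasDerivAt t) (fun t _ => by rw [hco]; exact hAo t)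
    (fun t _ => by rw [hco]; exact hBo t)
  obtain ⟨c1, hc1⟩ := jac_wronsk m n K y (deriv y) (deriv (deriv y))
    (fun t => A.eval t) (fun t => A.derivative.eval t)
    (fun t => A.derivative.derivative.eval t) hy1 hy2 (fun t _ => A.hasDerivAt t)
    (fun t _ => A.derivative.hasDerivAt t) hyo (fun t _ => by rw [hco]; exact hAo t)
  obtain ⟨c2, hc2⟩ := jac_wronsk m n K y (deriv y) (deriv (deriv y))
    (fun t => B.eval t) (fun t => B.derivative.eval t)
    (fun t => B.derivative.derivative.eval t) hy1 hy2 (fun t _ => B.hasDerivAt t)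
    (fun t _ => B.derivative.hasDerivAt t) hyo (fun t _ => by rw [hco]; exact hBo t)
  have hcne : c ≠ 0 := by
    rintro rfl
    apply hW
    apply Polynomial.eq_zero_of_infinite_isRoot
    refine (Set.Ioo_infinite (show (-1:ℝ) < 1 by norm_num)).mono fun t ht => ?_
    have := hc t ht
    simp [Polynomial.IsRoot.def] at this ⊢
    linarith
  refine ⟨Polynomial.C (c2 / c) * A - Polynomial.C (c1 / c) * B, ?_, fun t ht => ?_⟩
  · apply Polynomial.degree_le_of_natDegree_le
    refine (Polynomial.natDegree_sub_le _ _).trans (max_le ?_ ?_)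
    · exact (Polynomial.natDegree_C_mul_le _ _).trans (by omega)
    · exact (Polynomial.natDegree_C_mul_le _ _).trans (by omega)
  · have e0 := hc t ht
    have e1 := hc1 t ht
    have e2 := hc2 t ht
    have p1 : 0 < 1 - t := by linarith [ht.2]
    have p2 : 0 < 1 + t := by linarith [ht.1]
    have hne : (1 - t)^m * (1 + t)^n ≠ 0 := by positivity
    simp only [Polynomial.eval_sub, Polynomial.eval_mul, Polynomial.eval_C]
    field_simp
    generalize (1 - t)^m * (1 + t)^n = w at *
    apply mul_left_cancel₀ hne
    linear_combination (-y t) * e0 - Polynomial.eval t B * e1 + Polynomial.eval t A * e2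
end

section
/- Let p and σ be real numbers and c, d real constants. Define b : (−1,1) → ℝ by b(τ) = c + d·∫₀^τ (1+ς)^{−(p+σ+1)}·(1−ς)^{−(p−σ+1)} dς, and a : (−1,1) → ℝ by a(τ) = ((1−τ)/2)^{p−σ}·((1+τ)/2)^{p+σ}·b(τ), using real powers of positive quantities. Then for every τ ∈ (−1,1): (i) (1−τ²)·b''(τ) + 2·(σ − (p+1)·τ)·b'(τ) = 0; and (ii) (1−τ²)·a''(τ) + 2·((p−1)·τ − σ)·a'(τ) + 2p·a(τ) = 0. -/
theorem aux_w (A B k τ : ℝ) (hk : 0 < k) (hτ : τ ∈ Set.Ioo (-1 : ℝ) 1) :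
    HasDerivAt (fun t : ℝ => ((1 - t) / k) ^ A * ((1 + t) / k) ^ B)
      (((1 - τ) / k) ^ A * ((1 + τ) / k) ^ B * ((B - A - (A + B) * τ) / (1 - τ ^ 2))) τ := by
  have h1 : 0 < 1 - τ := by linarith [hτ.2]
  have h2 : 0 < 1 + τ := by linarith [hτ.1]
  have h3 : 1 - τ ^ 2 ≠ 0 := by nlinarith [mul_pos h1 h2]
  have e1 : HasDerivAt (fun t : ℝ => (1 - t) / k) (-1 / k) τ :=
    ((hasDerivAt_id τ).const_sub 1).div_const k
  have e2 : HasDerivAt (fun t : ℝ => (1 + t) / k) (1 / k) τ :=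
    ((hasDerivAt_id τ).const_add 1).div_const k
  have d1 := e1.rpow_const (p := A) (Or.inl (div_pos h1 hk).ne')
  have d2 := e2.rpow_const (p := B) (Or.inl (div_pos h2 hk).ne')
  have d := d1.mul d2
  refine d.congr_deriv ?_
  rw [Real.rpow_sub_one (div_pos h1 hk).ne', Real.rpow_sub_one (div_pos h2 hk).ne']
  generalize ((1 - τ) / k) ^ A = X
  generalize ((1 + τ) / k) ^ B = Y
  have h4 : 1 - τ ^ 2 = (1 - τ) * (1 + τ) := by ring
  rw [h4]
  have := h1.ne'
  have := h2.ne'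
  field_simp
  ring

open intervalIntegral in
/-- The paper's explicit solution (C.11) of the degenerate case `q = p`:
with `b(τ) = c + d·∫₀^τ (1+ς)^{−(p+σ+1)}(1−ς)^{−(p−σ+1)} dς` and
`a(τ) = ((1−τ)/2)^{p−σ}((1+τ)/2)^{p+σ}·b(τ)` one has, on `(−1,1)`,
`(1−τ²)b'' + 2(σ−(p+1)τ)b' = 0` and `(1−τ²)a'' + 2((p−1)τ−σ)a' + 2p·a = 0`. -/
theorem stmt13 (p σ c d : ℝ) (b a : ℝ → ℝ)
    (hb : ∀ τ ∈ Set.Ioo (-1 : ℝ) 1,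
      b τ = c + d * ∫ ς in (0 : ℝ)..τ, (1 + ς) ^ (-(p + σ + 1)) * (1 - ς) ^ (-(p - σ + 1)))
    (ha : ∀ τ ∈ Set.Ioo (-1 : ℝ) 1,
      a τ = ((1 - τ) / 2) ^ (p - σ) * ((1 + τ) / 2) ^ (p + σ) * b τ) :
    ∀ τ ∈ Set.Ioo (-1 : ℝ) 1,
      ((1 - τ ^ 2) * deriv (deriv b) τ + 2 * (σ - (p + 1) * τ) * deriv b τ = 0) ∧
      ((1 - τ ^ 2) * deriv (deriv a) τ + 2 * ((p - 1) * τ - σ) * deriv a τ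
        + 2 * p * a τ = 0) := by
  have key : ∀ τ ∈ Set.Ioo (-1 : ℝ) 1, 1 - τ ^ 2 ≠ 0 := by
    intro τ hτ
    have h1 : 0 < 1 - τ := by linarith [hτ.2]
    have h2 : 0 < 1 + τ := by linarith [hτ.1]
    nlinarith [mul_pos h1 h2]
  have nh : ∀ τ ∈ Set.Ioo (-1 : ℝ) 1, Set.Ioo (-1 : ℝ) 1 ∈ nhds τ :=
    fun τ hτ => isOpen_Ioo.mem_nhds hτ
  obtain ⟨f, hf⟩ : ∃ f : ℝ → ℝ, f = fun ς : ℝ =>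
    (1 + ς) ^ (-(p + σ + 1)) * (1 - ς) ^ (-(p - σ + 1)) := ⟨_, rfl⟩
  obtain ⟨W, hW⟩ : ∃ W : ℝ → ℝ, W = fun τ : ℝ =>
    ((1 - τ) / 2) ^ (p - σ) * ((1 + τ) / 2) ^ (p + σ) := ⟨_, rfl⟩
  have df : ∀ τ ∈ Set.Ioo (-1 : ℝ) 1,
      HasDerivAt f (f τ * ((2 * (p + 1) * τ - 2 * σ) / (1 - τ ^ 2))) τ := by
    intro τ hτ
    have h := aux_w (-(p - σ + 1)) (-(p + σ + 1)) 1 τ one_pos hτ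
    simp only [div_one] at h
    have hf' : f = fun t : ℝ => (1 - t) ^ (-(p - σ + 1)) * (1 + t) ^ (-(p + σ + 1)) := by
      rw [hf]; funext t; ring
    rw [hf']
    refine h.congr_deriv ?_
    ring
  have dW : ∀ τ ∈ Set.Ioo (-1 : ℝ) 1,
      HasDerivAt W (W τ * ((2 * σ - 2 * p * τ) / (1 - τ ^ 2))) τ := by
    intro τ hτ
    have h := aux_w (p - σ) (p + σ) 2 τ two_pos hτ
    rw [hW]
    refine h.congr_deriv ?_
    ring
  have fc : ContinuousOn f (Set.Ioo (-1 : ℝ) 1) :=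
    fun x hx => (df x hx).continuousAt.continuousWithinAt
  have db : ∀ τ ∈ Set.Ioo (-1 : ℝ) 1, HasDerivAt b (d * f τ) τ := by
    intro τ hτ
    have hsub : Set.uIcc (0 : ℝ) τ ⊆ Set.Ioo (-1 : ℝ) 1 :=
      Set.OrdConnected.uIcc_subset Set.ordConnected_Ioo (by norm_num) hτ
    have h := intervalIntegral.integral_hasDerivAt_right
      ((fc.mono hsub).intervalIntegrable)
      (fc.stronglyMeasurableAtFilter isOpen_Ioo τ hτ) (df τ hτ).continuousAt
    refine ((h.const_mul d).const_add c).congr_of_eventuallyEq ?_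
    filter_upwards [nh τ hτ] with t ht
    rw [hb t ht, hf]
  have da : ∀ τ ∈ Set.Ioo (-1 : ℝ) 1, HasDerivAt a
      (W τ * ((2 * σ - 2 * p * τ) / (1 - τ ^ 2)) * b τ + W τ * (d * f τ)) τ := by
    intro τ hτ
    refine ((dW τ hτ).mul (db τ hτ)).congr_of_eventuallyEq ?_
    filter_upwards [nh τ hτ] with t ht
    rw [ha t ht, hW]; rfl
  intro τ hτ
  have hk := key τ hτ
  have ddb : HasDerivAt (deriv b) (d * (f τ * ((2 * (p + 1) * τ - 2 * σ) / (1 - τ ^ 2)))) τ := by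
    refine ((df τ hτ).const_mul d).congr_of_eventuallyEq ?_
    filter_upwards [nh τ hτ] with t ht
    exact (db t ht).deriv
  have dM : HasDerivAt (fun t : ℝ => (2 * σ - 2 * p * t) / (1 - t ^ 2))
      (((-(2 * p)) * (1 - τ ^ 2) - (2 * σ - 2 * p * τ) * (-(2 * τ))) / (1 - τ ^ 2) ^ 2) τ := by
    have n : HasDerivAt (fun t : ℝ => 2 * σ - 2 * p * t) (-(2 * p)) τ := by
      simpa using ((hasDerivAt_id τ).const_mul (2 * p)).const_sub (2 * σ)
    have m : HasDerivAt (fun t : ℝ => 1 - t ^ 2) (-(2 * τ)) τ := by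
      simpa using (hasDerivAt_pow 2 τ).const_sub 1
    exact n.div m hk
  have dda := ((((dW τ hτ).mul dM).mul (db τ hτ)).add
    ((dW τ hτ).mul ((df τ hτ).const_mul d))).congr_of_eventuallyEq
    (f₁ := deriv a) (by
      filter_upwards [nh τ hτ] with t ht
      exact (da t ht).deriv)
  have haτ : a τ = W τ * b τ := by rw [ha τ hτ, hW]
  rw [ddb.deriv, (db τ hτ).deriv, dda.deriv, (da τ hτ).deriv, haτ]
  simp only [Pi.mul_apply]
  constructor
  · field_simp
    ring
  · field_simp
    ring
end

section
/- Let ζ : ℝ² → ℂ be a smooth function of the variables (τ, ρ) and p a natural number. Define the operator B by (Bζ)(τ,ρ) = (1−τ²)·∂_τ²ζ + 2τρ·∂_τ∂_ρζ − ρ²·∂_ρ²ζ − 2τ·∂_τζ. Then on all of ℝ²: ∂_ρ^p(Bζ) = B(∂_ρ^pζ) + 2τp·∂_τ(∂_ρ^pζ) − 2pρ·∂_ρ(∂_ρ^pζ) − p(p−1)·∂_ρ^pζ. -/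
/-- The `(τ,ρ)`-part of the reduced wave operator:
`(Bζ)(τ,ρ) = (1−τ²)∂_τ²ζ + 2τρ∂_τ∂_ρζ − ρ²∂_ρ²ζ − 2τ∂_τζ`. -/
noncomputable def Bop (ζ : ℝ → ℝ → ℂ) : ℝ → ℝ → ℂ := fun τ ρ =>
  ((1 - τ ^ 2 : ℝ) : ℂ) * pd1 (pd1 ζ) τ ρ + ((2 * τ * ρ : ℝ) : ℂ) * pd1 (pd2 ζ) τ ρ
    - ((ρ ^ 2 : ℝ) : ℂ) * pd2 (pd2 ζ) τ ρ - ((2 * τ : ℝ) : ℂ) * pd1 ζ τ ρ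

theorem aux_pd1_eq (u : ℝ → ℝ → ℂ) (hu : ContDiff ℝ (⊤ : ℕ∞) (Function.uncurry u)) (τ ρ : ℝ) :
    pd1 u τ ρ = fderiv ℝ (Function.uncurry u) (τ, ρ) (1, 0) := by
  have h1 : HasFDerivAt (Function.uncurry u) (fderiv ℝ (Function.uncurry u) (τ, ρ)) (τ, ρ) :=
    (hu.differentiable (by simp) (τ, ρ)).hasFDerivAt
  have h2 : HasDerivAt (fun t : ℝ => (t, ρ)) ((1 : ℝ), (0 : ℝ)) τ :=
    (hasDerivAt_id τ).prodMk (hasDerivAt_const τ ρ)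
  exact (h1.comp_hasDerivAt τ h2).deriv

theorem aux_pd2_has (u : ℝ → ℝ → ℂ) (hu : ContDiff ℝ (⊤ : ℕ∞) (Function.uncurry u)) (τ ρ : ℝ) :
    HasDerivAt (fun r => u τ r) (fderiv ℝ (Function.uncurry u) (τ, ρ) (0, 1)) ρ := by
  have h1 : HasFDerivAt (Function.uncurry u) (fderiv ℝ (Function.uncurry u) (τ, ρ)) (τ, ρ) :=
    (hu.differentiable (by simp) (τ, ρ)).hasFDerivAt
  have h2 : HasDerivAt (fun t : ℝ => (τ, t)) ((0 : ℝ), (1 : ℝ)) ρ :=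
    (hasDerivAt_const ρ τ).prodMk (hasDerivAt_id ρ)
  exact h1.comp_hasDerivAt ρ h2

theorem aux_pd2_eq (u : ℝ → ℝ → ℂ) (hu : ContDiff ℝ (⊤ : ℕ∞) (Function.uncurry u)) (τ ρ : ℝ) :
    pd2 u τ ρ = fderiv ℝ (Function.uncurry u) (τ, ρ) (0, 1) :=
  (aux_pd2_has u hu τ ρ).deriv

theorem aux_has (u : ℝ → ℝ → ℂ) (hu : ContDiff ℝ (⊤ : ℕ∞) (Function.uncurry u)) (τ ρ : ℝ) :
    HasDerivAt (fun r => u τ r) (pd2 u τ ρ) ρ := by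
  rw [aux_pd2_eq u hu]; exact aux_pd2_has u hu τ ρ

theorem aux_unc1 (u : ℝ → ℝ → ℂ) (hu : ContDiff ℝ (⊤ : ℕ∞) (Function.uncurry u)) :
    Function.uncurry (pd1 u) = fun x => fderiv ℝ (Function.uncurry u) x (1, 0) := by
  ext ⟨a, b⟩; exact aux_pd1_eq u hu a b

theorem aux_unc2 (u : ℝ → ℝ → ℂ) (hu : ContDiff ℝ (⊤ : ℕ∞) (Function.uncurry u)) :
    Function.uncurry (pd2 u) = fun x => fderiv ℝ (Function.uncurry u) x (0, 1) := by
  ext ⟨a, b⟩; exact aux_pd2_eq u hu a b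

theorem aux_fd (u : ℝ → ℝ → ℂ) (hu : ContDiff ℝ (⊤ : ℕ∞) (Function.uncurry u)) :
    ContDiff ℝ (⊤ : ℕ∞) (fderiv ℝ (Function.uncurry u)) :=
  hu.fderiv_right (by simp)

theorem aux_s1 (u : ℝ → ℝ → ℂ) (hu : ContDiff ℝ (⊤ : ℕ∞) (Function.uncurry u)) :
    ContDiff ℝ (⊤ : ℕ∞) (Function.uncurry (pd1 u)) := by
  rw [aux_unc1 u hu]; exact (aux_fd u hu).clm_apply contDiff_const

theorem aux_s2 (u : ℝ → ℝ → ℂ) (hu : ContDiff ℝ (⊤ : ℕ∞) (Function.uncurry u)) :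
    ContDiff ℝ (⊤ : ℕ∞) (Function.uncurry (pd2 u)) := by
  rw [aux_unc2 u hu]; exact (aux_fd u hu).clm_apply contDiff_const

theorem aux_comm (u : ℝ → ℝ → ℂ) (hu : ContDiff ℝ (⊤ : ℕ∞) (Function.uncurry u)) :
    pd2 (pd1 u) = pd1 (pd2 u) := by
  ext τ ρ
  have hd : DifferentiableAt ℝ (fderiv ℝ (Function.uncurry u)) (τ, ρ) :=
    (aux_fd u hu).differentiable (by simp) _
  rw [aux_pd2_eq _ (aux_s1 u hu), aux_pd1_eq _ (aux_s2 u hu), aux_unc1 u hu, aux_unc2 u hu,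
    fderiv_clm_apply hd (differentiableAt_const _), fderiv_clm_apply hd (differentiableAt_const _)]
  have hs : IsSymmSndFDerivAt ℝ (Function.uncurry u) (τ, ρ) :=
    hu.contDiffAt.isSymmSndFDerivAt (by simp; exact WithTop.coe_le_coe.2 le_top)
  simpa using hs (0, 1) (1, 0)

theorem aux_s2p (u : ℝ → ℝ → ℂ) (hu : ContDiff ℝ (⊤ : ℕ∞) (Function.uncurry u)) (p : ℕ) :
    ContDiff ℝ (⊤ : ℕ∞) (Function.uncurry (pd2^[p] u)) := by
  induction p with
  | zero => exact hu
  | succ p ih => rw [Function.iterate_succ_apply']; exact aux_s2 _ ih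

theorem aux_step (w : ℝ → ℝ → ℂ) (hw : ContDiff ℝ (⊤ : ℕ∞) (Function.uncurry w)) (c : ℝ) (d : ℝ)
    (τ ρ : ℝ) :
    pd2 (fun τ ρ => Bop w τ ρ + ((2 * τ * c : ℝ) : ℂ) * pd1 w τ ρ
        - ((2 * c * ρ : ℝ) : ℂ) * pd2 w τ ρ - (d : ℂ) * w τ ρ) τ ρ
    = Bop (pd2 w) τ ρ + ((2 * τ * (c + 1) : ℝ) : ℂ) * pd1 (pd2 w) τ ρ
        - ((2 * (c + 1) * ρ : ℝ) : ℂ) * pd2 (pd2 w) τ ρ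
        - ((d + 2 * c : ℝ) : ℂ) * pd2 w τ ρ := by
  have w1 := aux_s1 w hw
  have w2 := aux_s2 w hw
  have e0 := aux_has w hw τ ρ
  have e1 := aux_has _ w1 τ ρ
  have e2 := aux_has _ w2 τ ρ
  have e11 := aux_has _ (aux_s1 _ w1) τ ρ
  have e12 := aux_has _ (aux_s1 _ w2) τ ρ
  have e22 := aux_has _ (aux_s2 _ w2) τ ρ
  rw [aux_comm _ w1, aux_comm _ hw] at e11
  rw [aux_comm _ w2] at e12
  rw [aux_comm _ hw] at e1
  have r : HasDerivAt (fun r : ℝ => (r : ℂ)) 1 ρ := Complex.ofRealCLM.hasDerivAt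
  have key := ((((((e11.const_mul (1 - (τ : ℂ) ^ 2)).add
    ((r.const_mul (2 * (τ : ℂ))).mul e12)).sub ((r.pow 2).mul e22)).sub
    (e1.const_mul (2 * (τ : ℂ)))).add (e1.const_mul (2 * (τ : ℂ) * c))).sub
    ((r.const_mul (2 * (c : ℂ))).mul e2)).sub (e0.const_mul (d : ℂ))
  refine Eq.trans (Eq.trans ?_ key.deriv) ?_
  · rw [pd2]
    congr 1
    ext r
    simp [Bop]
  · simp [Bop]
    ring

/-- The commutator identity `∂_ρ^p(Bζ) = B(∂_ρ^pζ) + 2τp·∂_τ(∂_ρ^pζ)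
− 2pρ·∂_ρ(∂_ρ^pζ) − p(p−1)·∂_ρ^pζ`. -/
theorem stmt15 (ζ : ℝ → ℝ → ℂ) (hζ : ContDiff ℝ (⊤ : ℕ∞) (Function.uncurry ζ)) (p : ℕ) :
    ∀ τ ρ : ℝ,
      pd2^[p] (Bop ζ) τ ρ
      = Bop (pd2^[p] ζ) τ ρ + ((2 * τ * (p : ℝ) : ℝ) : ℂ) * pd1 (pd2^[p] ζ) τ ρ
        - ((2 * (p : ℝ) * ρ : ℝ) : ℂ) * pd2 (pd2^[p] ζ) τ ρ
        - (((p : ℝ) * ((p : ℝ) - 1) : ℝ) : ℂ) * pd2^[p] ζ τ ρ := by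
  induction p with
  | zero => intro τ ρ; simp
  | succ p ih =>
    intro τ ρ
    have h : pd2^[p] (Bop ζ) = _ := funext fun τ => funext fun ρ => ih τ ρ
    rw [Function.iterate_succ_apply', Function.iterate_succ_apply', h,
      aux_step _ (aux_s2p ζ hζ p) p]
    push_cast
    ring
end

section
/- For every natural number n, all real parameters α, β, and every τ ∈ ℝ, the Jacobi polynomial admits the alternative representation P_n^{(α,β)}(τ) = (1/n!)·Σ_{k=0}^{n} c_k·((τ−1)/2)^k, where c_k = (n!/(k!·(n−k)!))·( ∏_{j=k+1}^{n} (α+j) )·( ∏_{j=1}^{k} (n+j+α+β) ). -/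
lemma gbinom_eq_choose (z : ℝ) (r : ℕ) : gbinom z r = Ring.choose z r := by
  rw [Ring.choose_eq_smul, gbinom, ← descPochhammer_eval_eq_prod_range, ← Polynomial.aeval_eq_smeval,
    smul_eq_mul, div_eq_inv_mul, Polynomial.aeval_def, ← Polynomial.eval_map, descPochhammer_map]

lemma gbinom_add (r s : ℝ) (k : ℕ) :
    ∑ ij ∈ Finset.HasAntidiagonal.antidiagonal k, gbinom r ij.1 * gbinom s ij.2 = gbinom (r + s) k := by
  simp only [gbinom_eq_choose]
  exact (Ring.add_choose_eq k (Commute.all r s)).symm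

lemma gbinom_choose (r : ℝ) (m q : ℕ) :
    gbinom r (m + q) * ((m + q).choose m : ℝ) = gbinom r m * gbinom (r - m) q := by
  simp only [gbinom_eq_choose]
  have h := Ring.choose_smul_choose r (Nat.le_add_right m q)
  rw [nsmul_eq_mul, Nat.add_sub_cancel_left] at h
  rw [← h, mul_comm]

lemma triple_sum (F : ℕ → ℕ → ℕ → ℝ) (n : ℕ) :
    ∑ a ∈ Finset.HasAntidiagonal.antidiagonal n, ∑ b ∈ Finset.HasAntidiagonal.antidiagonal a.1, F b.1 b.2 a.2 =
    ∑ a ∈ Finset.HasAntidiagonal.antidiagonal n, ∑ b ∈ Finset.HasAntidiagonal.antidiagonal a.2, F a.1 b.1 b.2 := by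
  rw [Finset.sum_sigma', Finset.sum_sigma']
  refine Finset.sum_bij' (fun x _ => ⟨(x.2.1, x.2.2 + x.1.2), (x.2.2, x.1.2)⟩)
    (fun x _ => ⟨(x.1.1 + x.2.1, x.2.2), (x.1.1, x.2.1)⟩) ?_ ?_ ?_ ?_ ?_
  · rintro ⟨⟨a, b⟩, ⟨c, d⟩⟩ h
    simp at h ⊢
    omega
  · rintro ⟨⟨a, b⟩, ⟨c, d⟩⟩ h
    simp at h ⊢
    omega
  · rintro ⟨⟨a, b⟩, ⟨c, d⟩⟩ h
    simp at h ⊢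
    omega
  · rintro ⟨⟨a, b⟩, ⟨c, d⟩⟩ h
    simp at h ⊢
    omega
  · rintro ⟨⟨a, b⟩, ⟨c, d⟩⟩ h
    rfl

lemma jacobi_aux (n : ℕ) (a b x : ℝ) :
    ∑ p ∈ Finset.HasAntidiagonal.antidiagonal n, gbinom a p.1 * gbinom b p.2 * x ^ p.2 * (1 + x) ^ p.1 =
    ∑ p ∈ Finset.HasAntidiagonal.antidiagonal n, gbinom a p.1 * gbinom (a - p.1 + b) p.2 * x ^ p.2 := by
  have h := triple_sum (fun m q p => gbinom a (m + q) * ((m + q).choose m : ℝ) *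
    gbinom b p * x ^ (q + p)) n
  refine Eq.trans (Finset.sum_congr rfl ?_) (h.trans (Finset.sum_congr rfl ?_))
  · intro p _
    rw [(Commute.all (1 : ℝ) x).add_pow', Finset.mul_sum]
    refine Finset.sum_congr rfl fun q hq => ?_
    rw [Finset.HasAntidiagonal.mem_antidiagonal] at hq
    rw [hq, nsmul_eq_mul, one_pow, pow_add]
    ring
  · intro p _
    rw [← gbinom_add, Finset.mul_sum, Finset.sum_mul]
    refine Finset.sum_congr rfl fun q hq => ?_
    rw [Finset.HasAntidiagonal.mem_antidiagonal] at hq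
    rw [gbinom_choose, hq]
    ring

lemma prod_one (n k : ℕ) (hk : k ≤ n) (α : ℝ) :
    ∏ i ∈ Finset.range (n - k), ((n : ℝ) + α - i) = ∏ j ∈ Finset.Icc (k + 1) n, (α + (j : ℝ)) := by
  refine Finset.prod_bij' (fun i _ => n - i) (fun j _ => n - j) ?_ ?_ ?_ ?_ ?_
  · intro i hi; simp at hi ⊢; omega
  · intro i hi; simp at hi ⊢; omega
  · intro i hi; simp at hi ⊢; omega
  · intro i hi; simp at hi ⊢; omega
  · intro i hi
    simp at hi
    rw [Nat.cast_sub (by omega)]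
    ring

/-- The alternative representation of the Jacobi polynomial (Appendix C.1.1):
`P_n^{(α,β)}(τ) = (1/n!)·Σ_{k=0}^n c_k·((τ−1)/2)^k` with
`c_k = (n!/(k!(n−k)!))·∏_{j=k+1}^n (α+j)·∏_{j=1}^k (n+j+α+β)`. -/
theorem stmt19 (n : ℕ) (α β : ℝ) (τ : ℝ) :
    jacobiP n α β τ = (1 / (Nat.factorial n : ℝ)) *
      ∑ k ∈ Finset.range (n + 1),
        ((Nat.factorial n : ℝ) / ((Nat.factorial k : ℝ) * (Nat.factorial (n - k) : ℝ)))
          * (∏ j ∈ Finset.Icc (k + 1) n, (α + (j : ℝ)))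
          * (∏ j ∈ Finset.Icc 1 k, ((n : ℝ) + (j : ℝ) + α + β))
          * ((τ - 1) / 2) ^ k := by
  have h1 : jacobiP n α β τ = ∑ p ∈ Finset.HasAntidiagonal.antidiagonal n, gbinom ((n : ℝ) + α) p.1 *
      gbinom ((n : ℝ) + β) p.2 * ((τ - 1) / 2) ^ p.2 * (1 + (τ - 1) / 2) ^ p.1 := by
    rw [Finset.Nat.sum_antidiagonal_eq_sum_range_succ_mk, jacobiP]
    refine Finset.sum_congr rfl fun l _ => ?_
    rw [show 1 + (τ - 1) / 2 = (τ + 1) / 2 by ring]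
  rw [h1, jacobi_aux, ← Finset.Nat.sum_antidiagonal_swap,
    Finset.Nat.sum_antidiagonal_eq_sum_range_succ_mk, Finset.mul_sum]
  refine Finset.sum_congr rfl fun k hk => ?_
  have hk' : k ≤ n := by simp at hk; omega
  have h2 := prod_one k 0 (Nat.zero_le k) ((n : ℝ) + α + β)
  have h3 : ∏ j ∈ Finset.Icc 1 k, ((n : ℝ) + (j : ℝ) + α + β) =
      ∏ j ∈ Finset.Icc (0 + 1) k, ((n : ℝ) + α + β + (j : ℝ)) :=
    Finset.prod_congr rfl fun j _ => by ring
  have hn := Nat.cast_ne_zero (R := ℝ).2 (Nat.factorial_ne_zero n)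
  have e : (n : ℝ) + α - ((n - k : ℕ) : ℝ) + (n + β) = k + (n + α + β) := by
    rw [Nat.cast_sub hk']; ring
  simp only [Prod.swap, Prod.fst, Prod.snd]
  rw [e, h3, ← h2, ← prod_one n k hk' α, gbinom, gbinom, Nat.sub_zero]
  field_simp
end
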